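/- Let α, β, γ, λ > 0 satisfy γ ≤ αβ, and let ϱ ∈ (β − γ/α, β). Then there exists δ₀ > 0 such that for every δ ≥ δ₀ there exist ε > 0, an infinitely differentiable function ψ : ℝ → ℝ, and a strictly increasing sequence (tₙ) of positive reals tending to +∞, such that ψ satisfies, for every t ≥ 0, the scalar equation ψ'''(t) + α·ψ''(t) + βλ·ψ'(t) + γλ·ψ(t) − ϱδλ·∫₀ᵗ e^{−δ(t−s)} ψ'(s) ds = 0, and moreover ψ(tₙ)² ≥ e^{ε·tₙ} for every n. -/

import Mathlib

/-!
A mode `Re (c e^{pt})` solves the memory equation as soon as `p` satisfies the characteristic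
equation `p³ + αp² + βλp + γλ = ϱδλ p/(p + δ)` and the amplitude `c` is rotated so that
`Re (c p/(p + δ)) = 0`, which kills the transient `e^{-δt}` that the memory integral, starting at
time `0`, leaves behind. Multiplied by `p + δ`, the characteristic equation is a real quartic.
As `δ → ∞` its third Hurwitz determinant is asymptotic to `λ(α(β - ϱ) - γ)δ³`, so it is eventually
negative precisely because `β - γ/α < ϱ`, and then a conjugate pair of roots lies in the right
half-plane. Such a mode is sampled at its peaks.
-/

section Quartic

open Polynomial

theorem exists_quartic_factorization (a₀ a₁ a₂ a₃ : ℝ) :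
    ∃ b c d e : ℝ, a₃ = b + d ∧ a₂ = c + e + b * d ∧ a₁ = b * e + c * d ∧ a₀ = c * e := by
  have hquartic : IsMonicOfDegree (X ^ 4 + C a₃ * X ^ 3 + C a₂ * X ^ 2 + C a₁ * X + C a₀) 4 :=
    ⟨by compute_degree!, by monicity!⟩
  obtain ⟨f, g, hf, hg, hfg⟩ := hquartic.eq_isMonicOfDegree_two_mul_isMonicOfDegree
  obtain ⟨b, c, rfl⟩ := isMonicOfDegree_two_iff.mp hf
  obtain ⟨d, e, rfl⟩ := isMonicOfDegree_two_iff.mp hg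
  have hexpand : (X ^ 2 + C b * X + C c) * (X ^ 2 + C d * X + C e)
      = X ^ 4 + C (b + d) * X ^ 3 + C (c + e + b * d) * X ^ 2 + C (b * e + c * d) * X
        + C (c * e) := by
    simp only [map_add, map_mul]
    ring
  rw [hexpand] at hfg
  have hcoeff (n : ℕ) := congrArg (coeff · n) hfg
  refine ⟨b, c, d, e, ?_, ?_, ?_, ?_⟩
  · simpa [coeff_X, coeff_C, -map_add, -map_mul] using hcoeff 3
  · simpa [coeff_X, coeff_C, -map_add, -map_mul] using hcoeff 2
  · simpa [coeff_X, coeff_C, -map_add, -map_mul] using hcoeff 1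
  · simpa [coeff_X, coeff_C, -map_add, -map_mul] using hcoeff 0

/-- The third Hurwitz determinant of the monic quartic `x⁴ + a₃x³ + a₂x² + a₁x + a₀`, whose sign
decides in the Routh–Hurwitz criterion whether a root leaves the left half-plane. -/
def quarticHurwitzDet (a₀ a₁ a₂ a₃ : ℝ) : ℝ :=
  a₁ * (a₂ * a₃ - a₁) - a₀ * a₃ ^ 2

theorem quarticHurwitzDet_of_factorization (b c d e : ℝ) :
    quarticHurwitzDet (c * e) (b * e + c * d) (c + e + b * d) (b + d)
      = b * d * ((c - e) ^ 2 + (b + d) * (b * e + c * d)) := by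
  unfold quarticHurwitzDet
  ring

theorem exists_quadratic_root_re_pos_im_pos {b c : ℝ} (hb : b < 0)
    (hroot : ∀ x : ℝ, 0 < x → x ^ 2 + b * x + c ≠ 0) :
    ∃ z : ℂ, 0 < z.re ∧ 0 < z.im ∧ z ^ 2 + b * z + c = 0 := by
  have hdisc : 0 < c - b ^ 2 / 4 := by
    by_contra! hle
    have hsq : √(b ^ 2 / 4 - c) ^ 2 = b ^ 2 / 4 - c := Real.sq_sqrt (by linarith)
    have hx : 0 < -b / 2 + √(b ^ 2 / 4 - c) := by
      linarith [Real.sqrt_nonneg (b ^ 2 / 4 - c)]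
    exact hroot _ hx (by linear_combination hsq)
  obtain ⟨y, hy, hysq⟩ : ∃ y : ℝ, 0 < y ∧ y ^ 2 = c - b ^ 2 / 4 :=
    ⟨√(c - b ^ 2 / 4), Real.sqrt_pos.mpr hdisc, Real.sq_sqrt hdisc.le⟩
  have hysq' : (y : ℂ) ^ 2 = c - b ^ 2 / 4 := mod_cast hysq
  refine ⟨(-b / 2 : ℝ) + y * Complex.I, by simpa using hb, by simpa using hy, ?_⟩
  push_cast
  linear_combination (y : ℂ) ^ 2 * Complex.I_sq - hysq'

theorem exists_quartic_root_re_pos_im_pos {a₀ a₁ a₂ a₃ : ℝ} (h₀ : 0 ≤ a₀) (h₁ : 0 ≤ a₁)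
    (h₂ : 0 ≤ a₂) (h₃ : 0 ≤ a₃) (hdet : quarticHurwitzDet a₀ a₁ a₂ a₃ < 0) :
    ∃ z : ℂ, 0 < z.re ∧ 0 < z.im ∧ z ^ 4 + a₃ * z ^ 3 + a₂ * z ^ 2 + a₁ * z + a₀ = 0 := by
  have hroot : ∀ x : ℝ, 0 < x → x ^ 4 + a₃ * x ^ 3 + a₂ * x ^ 2 + a₁ * x + a₀ ≠ 0 :=
    fun x hx => by positivity
  obtain ⟨b, c, d, e, rfl, rfl, rfl, rfl⟩ := exists_quartic_factorization a₀ a₁ a₂ a₃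
  rw [quarticHurwitzDet_of_factorization] at hdet
  have hbd : b * d < 0 := neg_of_mul_neg_left hdet (by positivity)
  rcases mul_neg_iff.mp hbd with ⟨-, hd⟩ | ⟨hb, -⟩
  · obtain ⟨z, hre, him, hz⟩ := exists_quadratic_root_re_pos_im_pos (c := e) hd
      fun x hx h => hroot x hx (by linear_combination (x ^ 2 + b * x + c) * h)
    exact ⟨z, hre, him, by push_cast; linear_combination (z ^ 2 + b * z + c) * hz⟩
  · obtain ⟨z, hre, him, hz⟩ := exists_quadratic_root_re_pos_im_pos (c := c) hb
      fun x hx h => hroot x hx (by linear_combination (x ^ 2 + d * x + e) * h)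
    exact ⟨z, hre, him, by push_cast; linear_combination (z ^ 2 + d * z + e) * hz⟩

end Quartic

section CharacteristicRoot

open Filter Topology

variable {α β γ lam ϱ : ℝ}

theorem eventually_quarticHurwitzDet_neg (hα : 0 < α) (hlam : 0 < lam) (hϱ : β - γ / α < ϱ) :
    ∀ᶠ δ in atTop, quarticHurwitzDet (γ * lam * δ) ((β - ϱ) * δ * lam + γ * lam)
      (α * δ + β * lam) (α + δ) < 0 := by
  let G (x : ℝ) : ℝ := ((β - ϱ) * lam + γ * lam * x) *
    ((α + β * lam * x) * (α * x + 1) - x * ((β - ϱ) * lam + γ * lam * x))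
      - γ * lam * (α * x + 1) ^ 2
  have hG : Tendsto (fun δ : ℝ => G δ⁻¹) atTop (𝓝 (G 0)) :=
    (Continuous.tendsto (by fun_prop) 0).comp tendsto_inv_atTop_zero
  have hG0 : G 0 < 0 := by
    have hαγ : (β - ϱ) * α < γ := (lt_div_iff₀ hα).mp (by linarith)
    calc G 0 = lam * ((β - ϱ) * α - γ) := by ring
      _ < 0 := mul_neg_of_pos_of_neg hlam (by linarith)
  filter_upwards [hG.eventually_lt_const hG0, eventually_gt_atTop 0] with δ hδG hδ
  calc quarticHurwitzDet (γ * lam * δ) ((β - ϱ) * δ * lam + γ * lam) (α * δ + β * lam) (α + δ)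
      = δ ^ 3 * G δ⁻¹ := by
        simp only [quarticHurwitzDet, G]
        field_simp
    _ < 0 := mul_neg_of_pos_of_neg (by positivity) hδG

theorem add_ofReal_ne_zero {p : ℂ} (hp : p.im ≠ 0) (r : ℝ) : p + r ≠ 0 :=
  fun h => hp (by simpa using congrArg Complex.im h)

theorem eventually_exists_characteristic_root (hα : 0 < α) (hlam : 0 < lam)
    (hϱ₁ : β - γ / α < ϱ) (hϱ₂ : ϱ ≤ β) :
    ∀ᶠ δ : ℝ in atTop, ∃ p : ℂ, 0 < p.re ∧ 0 < p.im ∧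
      p ^ 3 + α * p ^ 2 + (β * lam : ℝ) * p + (γ * lam : ℝ)
        = (ϱ * δ * lam : ℝ) * (p / (p + δ)) := by
  have hγ : 0 < γ := (div_pos_iff_of_pos_right hα).mp (by linarith)
  filter_upwards [eventually_quarticHurwitzDet_neg hα hlam hϱ₁, eventually_ge_atTop 0,
    eventually_ge_atTop (-(β * lam) / α)] with δ hdet hδ hcoeff
  obtain ⟨p, hre, him, hp⟩ := exists_quartic_root_re_pos_im_pos (by positivity) (by positivity)
    (neg_le_iff_add_nonneg.mp ((div_le_iff₀' hα).mp hcoeff)) (by positivity) hdet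
  have hpδ : p + δ ≠ 0 := add_ofReal_ne_zero him.ne' δ
  refine ⟨p, hre, him, ?_⟩
  field_simp
  push_cast at hp ⊢
  linear_combination hp

end CharacteristicRoot

section Mode

/-- The real oscillation `t ↦ Re (c e^{pt})` with complex amplitude `c` and complex rate `p`.
Keeping `c` and `p` complex turns differentiation and integration into multiplication and division
of the amplitude by `p`. -/
noncomputable def expMode (c p : ℂ) (t : ℝ) : ℝ :=
  (c * Complex.exp (p * t)).re

theorem hasDerivAt_expMode (c p : ℂ) (t : ℝ) :
    HasDerivAt (expMode c p) (expMode (c * p) p t) t := by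
  have hexp : HasDerivAt (fun z : ℂ => c * Complex.exp (p * z)) (c * p * Complex.exp (p * t)) t :=
    (((hasDerivAt_id' (t : ℂ)).const_mul p).cexp.const_mul c).congr_deriv (by ring)
  exact hexp.real_of_complex

theorem deriv_expMode (c p : ℂ) : deriv (expMode c p) = expMode (c * p) p :=
  funext fun t => (hasDerivAt_expMode c p t).deriv

theorem iteratedDeriv_expMode (n : ℕ) (c p : ℂ) :
    iteratedDeriv n (expMode c p) = expMode (c * p ^ n) p := by
  induction n with
  | zero => simp
  | succ n ih => rw [iteratedDeriv_succ, ih, deriv_expMode, pow_succ, mul_assoc]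

theorem contDiff_expMode {n : WithTop ℕ∞} (c p : ℂ) : ContDiff ℝ n (expMode c p) :=
  Complex.reCLM.contDiff.comp
    (contDiff_const.mul (contDiff_const.mul Complex.ofRealCLM.contDiff).cexp)

theorem exp_mul_expMode (r : ℝ) (c p : ℂ) (t : ℝ) :
    Real.exp (r * t) * expMode c p t = expMode c (p + r) t := by
  rw [expMode, expMode, ← Complex.re_ofReal_mul, add_mul, Complex.exp_add]
  push_cast
  ring_nf

theorem integral_expMode (c : ℂ) {p : ℂ} (hp : p ≠ 0) (a b : ℝ) :
    ∫ s in a..b, expMode c p s = expMode (c / p) p b - expMode (c / p) p a := by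
  refine intervalIntegral.integral_eq_sub_of_hasDerivAt (fun s _ => ?_)
    ((contDiff_expMode (n := 0) c p).continuous.intervalIntegrable a b)
  simpa [div_mul_cancel₀ c hp] using hasDerivAt_expMode (c / p) p s

theorem integral_exp_mul_expMode (c : ℂ) {p : ℂ} {δ : ℝ} (hp : p + δ ≠ 0) (t : ℝ) :
    ∫ s in (0 : ℝ)..t, Real.exp (-δ * (t - s)) * expMode c p s
      = expMode (c / (p + δ)) p t - Real.exp (-δ * t) * (c / (p + δ)).re := by
  have hsplit (s : ℝ) : Real.exp (-δ * (t - s)) * expMode c p s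
      = Real.exp (-δ * t) * expMode c (p + δ) s := by
    rw [← exp_mul_expMode, ← mul_assoc, ← Real.exp_add]
    ring_nf
  simp only [hsplit]
  rw [intervalIntegral.integral_const_mul, integral_expMode c hp, mul_sub, exp_mul_expMode]
  simp [expMode]

theorem expMode_memory_equation {a₀ a₁ a₂ κ δ : ℝ} {c p : ℂ} (hp : p + δ ≠ 0)
    (hchar : p ^ 3 + a₂ * p ^ 2 + a₁ * p + a₀ = κ * (p / (p + δ)))
    (hc : (c * (p / (p + δ))).re = 0) (t : ℝ) :
    iteratedDeriv 3 (expMode c p) t + a₂ * iteratedDeriv 2 (expMode c p) t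
      + a₁ * deriv (expMode c p) t + a₀ * expMode c p t
      - κ * ∫ s in (0 : ℝ)..t, Real.exp (-δ * (t - s)) * deriv (expMode c p) s = 0 := by
  rw [deriv_expMode, integral_exp_mul_expMode _ hp, iteratedDeriv_expMode, iteratedDeriv_expMode,
    mul_div_assoc, hc, mul_zero, sub_zero]
  simp only [expMode, ← Complex.re_ofReal_mul, ← Complex.add_re, ← Complex.sub_re]
  rw [← Complex.zero_re]
  congr 1
  linear_combination c * Complex.exp (p * t) * hchar

theorem exists_norm_eq_one_re_mul_eq_zero (w : ℂ) : ∃ c : ℂ, ‖c‖ = 1 ∧ (c * w).re = 0 := by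
  refine ⟨Complex.I * Complex.exp ((-w.arg : ℝ) * Complex.I), ?_, ?_⟩
  · rw [norm_mul, Complex.norm_I, Complex.norm_exp_ofReal_mul_I, mul_one]
  · have hrotate : Complex.I * Complex.exp ((-w.arg : ℝ) * Complex.I) * w = Complex.I * ‖w‖ := by
      nth_rw 2 [← Complex.norm_mul_exp_arg_mul_I w]
      rw [mul_assoc, mul_left_comm (Complex.exp _), ← Complex.exp_add]
      simp
    rw [hrotate]
    simp

theorem expMode_eq_norm_mul_cos (c p : ℂ) (t : ℝ) :
    expMode c p t = ‖c‖ * (Real.exp (p.re * t) * Real.cos (c.arg + p.im * t)) := by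
  nth_rw 1 [expMode, ← Complex.norm_mul_exp_arg_mul_I c]
  rw [mul_assoc, ← Complex.exp_add, Complex.re_ofReal_mul, Complex.exp_re]
  simp

theorem exists_strictMono_expMode_peaks (c : ℂ) {p : ℂ} (hp : 0 < p.im) :
    ∃ t : ℕ → ℝ, StrictMono t ∧ (∀ n, 0 < t n) ∧ Filter.Tendsto t Filter.atTop Filter.atTop ∧
      ∀ n, expMode c p (t n) = ‖c‖ * Real.exp (p.re * t n) := by
  have hphase : c.arg < 2 * Real.pi := by linarith [c.arg_le_pi, Real.pi_pos]
  refine ⟨fun n => (((n + 1 : ℕ) : ℝ) * (2 * Real.pi) - c.arg) / p.im, ?_, ?_, ?_, ?_⟩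
  · intro m n hmn
    dsimp only
    gcongr
  · intro n
    refine div_pos (sub_pos.mpr (hphase.trans_le ?_)) hp
    exact le_mul_of_one_le_left Real.two_pi_pos.le (by simp)
  · refine Filter.Tendsto.atTop_div_const hp (Filter.tendsto_atTop_add_const_right _ _ ?_)
    exact ((Filter.tendsto_add_atTop_iff_nat 1).mpr tendsto_natCast_atTop_atTop).atTop_mul_const
      Real.two_pi_pos
  · intro n
    rw [expMode_eq_norm_mul_cos, mul_div_cancel₀ _ hp.ne', add_sub_cancel,
      Real.cos_nat_mul_two_pi, mul_one]

end Mode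

theorem scalar_mgt_memory_exponential_growth_general (α β γ lam : ℝ)
    (hα : 0 < α) (hlam : 0 < lam) (ϱ : ℝ) (hϱ₁ : β - γ / α < ϱ) (hϱ₂ : ϱ ≤ β) :
    ∃ δ₀ > 0, ∀ δ ≥ δ₀, ∃ ε > 0, ∃ ψ : ℝ → ℝ, ContDiff ℝ (⊤ : ℕ∞) ψ ∧
      ∃ tseq : ℕ → ℝ, StrictMono tseq ∧ (∀ n, 0 < tseq n) ∧
        Filter.Tendsto tseq Filter.atTop Filter.atTop ∧
        (∀ t : ℝ, 0 ≤ t →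
          iteratedDeriv 3 ψ t + α * iteratedDeriv 2 ψ t + β * lam * deriv ψ t
            + γ * lam * ψ t
            - ϱ * δ * lam * ∫ s in (0 : ℝ)..t, Real.exp (-δ * (t - s)) * deriv ψ s = 0) ∧
        (∀ n : ℕ, Real.exp (ε * tseq n) ≤ (ψ (tseq n)) ^ 2) := by
  obtain ⟨δ₀, hδ₀⟩ := Filter.eventually_atTop.mp
    ((Filter.eventually_gt_atTop 0).and
      (eventually_exists_characteristic_root hα hlam hϱ₁ hϱ₂))
  refine ⟨δ₀, (hδ₀ δ₀ le_rfl).1, fun δ hδ => ?_⟩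
  obtain ⟨-, p, hre, him, hchar⟩ := hδ₀ δ hδ
  have hpδ : p + δ ≠ 0 := add_ofReal_ne_zero him.ne' δ
  obtain ⟨c, hnorm, hc⟩ := exists_norm_eq_one_re_mul_eq_zero (p / (p + δ))
  obtain ⟨tseq, hmono, hpos, htendsto, hpeak⟩ := exists_strictMono_expMode_peaks c him
  refine ⟨2 * p.re, by positivity, expMode c p, contDiff_expMode c p, tseq, hmono, hpos, htendsto,
    fun t _ => expMode_memory_equation hpδ hchar hc t, fun n => ?_⟩
  rw [hpeak, hnorm, one_mul, ← Real.exp_nat_mul, Nat.cast_ofNat, mul_assoc]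

/-- Scalar (single eigenmode) reduction of the exponential growth theorem for the MGT
equation with exponential memory kernel of type II. -/
theorem scalar_mgt_memory_exponential_growth (α β γ lam : ℝ)
    (hα : 0 < α) (hβ : 0 < β) (hγ : 0 < γ) (hlam : 0 < lam) (hγαβ : γ ≤ α * β)
    (ϱ : ℝ) (hϱ₁ : β - γ / α < ϱ) (hϱ₂ : ϱ < β) :
    ∃ δ₀ > 0, ∀ δ ≥ δ₀, ∃ ε > 0, ∃ ψ : ℝ → ℝ, ContDiff ℝ (⊤ : ℕ∞) ψ ∧
      ∃ tseq : ℕ → ℝ, StrictMono tseq ∧ (∀ n, 0 < tseq n) ∧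
        Filter.Tendsto tseq Filter.atTop Filter.atTop ∧
        (∀ t : ℝ, 0 ≤ t →
          iteratedDeriv 3 ψ t + α * iteratedDeriv 2 ψ t + β * lam * deriv ψ t
            + γ * lam * ψ t
            - ϱ * δ * lam * ∫ s in (0 : ℝ)..t, Real.exp (-δ * (t - s)) * deriv ψ s = 0) ∧
        (∀ n : ℕ, Real.exp (ε * tseq n) ≤ (ψ (tseq n)) ^ 2) :=
  scalar_mgt_memory_exponential_growth_general α β γ lam hα hlam ϱ hϱ₁ hϱ₂.le
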